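/- Let K be a shape-regular element with inscribed ball B(K) of radius ρ_K ≃ h_K centered at x_K, let β̄ ∈ ℝ^d be a nonzero constant vector, and let Γ = {x ∈ B(K) : β̄·(x − x_K) = 0} be the hyperplane section through x_K orthogonal to β̄. Then for all polynomials u of degree ≤ p: h_K^{−1}‖u‖²_{L²(K)} ≤ C (h_K ‖β̄_r·∇u‖²_{L²(K)} + ‖u‖²_{L²(Γ)}), where β̄_r = β̄/|β̄| and C depends only on d, p and the shape-regularity constant. -/

import Mathlib

open MeasureTheory

/-!
A similarity of ratio `ρ` carries the unit balls of a fixed reference configuration, the orthogonal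
sum of `ℝ` and a model of the hyperplane, to `B(x_K, ρ)` and its section `Γ`; it preserves
polynomials of degree at most `p`, so only the powers of `ρ` appearing in the change of variables
have to be tracked. On the reference configuration the estimate is a comparison of seminorms on a
finite-dimensional space: a polynomial whose derivative along the first factor vanishes is constant
along that factor, so it is zero if moreover it vanishes on the second one. Since analytic functions
are determined by their values on any ball, the left-hand side may be taken over a larger ball, and
shape regularity bounds the radius needed to cover `K`.
-/

section PolynomialFunctions

variable (R M : Type*) [CommSemiring R] [AddCommMonoid M] [Module R M]

/-- The functions on a module `M` that are polynomial of degree at most `p`. To avoid coordinates,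
they are encoded as the `p`-th power, in the algebra of all functions `M → R`, of the submodule of
affine functions. -/
def polyFunDegreeLE (p : ℕ) : Submodule R (M → R) :=
  (1 ⊔ LinearMap.range (LinearMap.ltoFun R M R R)) ^ p

variable {R M}

instance polyFunDegreeLE.instFinite [Module.Free R M] [Module.Finite R M] (p : ℕ) :
    Module.Finite R (polyFunDegreeLE R M p) := by
  refine Module.Finite.iff_fg.2 (Submodule.FG.pow (Submodule.FG.sup ?_ ?_) p)
  · exact Submodule.one_eq_span (R := R) (A := M → R) ▸ Submodule.fg_span_singleton 1
  · exact Module.Finite.iff_fg.1 inferInstance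

lemma comp_affine_mem_polyFunDegreeLE {N : Type*} [AddCommMonoid N] [Module R N] {p : ℕ}
    {u : M → R} (hu : u ∈ polyFunDegreeLE R M p) (a : M) (L : N →ₗ[R] M) :
    (fun x ↦ u (a + L x)) ∈ polyFunDegreeLE R N p := by
  let pullback : (M → R) →ₐ[R] (N → R) :=
    AlgHom.pi fun x ↦ Pi.evalAlgHom R (fun _ : M ↦ R) (a + L x)
  suffices h : (polyFunDegreeLE R M p).map pullback.toLinearMap ≤ polyFunDegreeLE R N p from
    h ⟨u, hu, rfl⟩
  rw [polyFunDegreeLE, Submodule.map_pow, Submodule.map_sup, Submodule.map_one]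
  refine pow_le_pow_left' (sup_le le_sup_left ?_) p
  rintro _ ⟨_, ⟨l, rfl⟩, rfl⟩
  have hsplit : pullback (LinearMap.ltoFun R M R R l) =
      algebraMap R (N → R) (l a) + LinearMap.ltoFun R N R R (l ∘ₗ L) :=
    funext fun x ↦ map_add l a (L x)
  exact hsplit ▸ Submodule.add_mem_sup (Submodule.algebraMap_mem _) ⟨_, rfl⟩

lemma aeval_mem_pow_of_totalDegree_le {A σ : Type*} [CommSemiring A] [Algebra R A]
    {S : Submodule R A} (hS : 1 ≤ S) {f : σ → A} (hf : ∀ i, f i ∈ S) {p : ℕ}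
    (q : MvPolynomial σ R) (hq : q.totalDegree ≤ p) : MvPolynomial.aeval f q ∈ S ^ p := by
  rw [MvPolynomial.aeval_def, MvPolynomial.eval₂_eq]
  refine Submodule.sum_mem _ fun m hm ↦ ?_
  rw [← Algebra.smul_def]
  have hdegree := (MvPolynomial.le_totalDegree hm).trans hq
  refine Submodule.smul_mem _ _ (pow_le_pow_right' hS hdegree ?_)
  rw [Finsupp.sum, ← Finset.prod_pow_eq_pow_sum]
  induction m.support using Finset.cons_induction with
  | empty => exact Submodule.one_le.1 le_rfl
  | cons i t hi ih =>
    rw [Finset.prod_cons, Finset.prod_cons]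
    exact Submodule.mul_mem_mul (Submodule.pow_mem_pow S (hf i) (m i)) ih

lemma eval_mem_polyFunDegreeLE {σ : Type*} {p : ℕ} (q : MvPolynomial σ R)
    (hq : q.totalDegree ≤ p) (l : σ → M →ₗ[R] R) :
    (fun x ↦ MvPolynomial.eval (fun i ↦ l i x) q) ∈ polyFunDegreeLE R M p := by
  have h := aeval_mem_pow_of_totalDegree_le (S := 1 ⊔ LinearMap.range (LinearMap.ltoFun R M R R))
    le_sup_left (f := fun i ↦ LinearMap.ltoFun R M R R (l i))
    (fun i ↦ Submodule.mem_sup_right ⟨l i, rfl⟩) q hq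
  rw [polyFunDegreeLE]
  convert h using 1
  funext x
  simp [MvPolynomial.aeval_def, MvPolynomial.eval₂_eq, MvPolynomial.eval_eq]

end PolynomialFunctions

lemma analyticOnNhd_of_mem_polyFunDegreeLE {E : Type*} [NormedAddCommGroup E] [NormedSpace ℝ E]
    [FiniteDimensional ℝ E] {p : ℕ} {u : E → ℝ} (hu : u ∈ polyFunDegreeLE ℝ E p) :
    AnalyticOnNhd ℝ u Set.univ := by
  refine Submodule.pow_induction_on_left _ (C := fun u ↦ AnalyticOnNhd ℝ u Set.univ)
    (fun _ ↦ analyticOnNhd_const) (fun _ _ ↦ AnalyticOnNhd.add) (fun w hw u hu ↦ ?_) hu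
  refine AnalyticOnNhd.mul ?_ hu
  obtain ⟨c, hc, _, ⟨l, rfl⟩, rfl⟩ := Submodule.mem_sup.1 hw
  obtain ⟨c, rfl⟩ := Submodule.mem_one.1 hc
  exact analyticOnNhd_const.add (l.toContinuousLinearMap.analyticOnNhd _)

section FiniteDimensionalComparison

variable {V : Type*} [AddCommGroup V] [Module ℝ V]

lemma exists_norm_le_of_ker_le {X Y : Type*} [FiniteDimensional ℝ V] [NormedAddCommGroup X]
    [NormedSpace ℝ X] [NormedAddCommGroup Y] [NormedSpace ℝ Y] (A : V →ₗ[ℝ] X) (B : V →ₗ[ℝ] Y)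
    (h : LinearMap.ker B ≤ LinearMap.ker A) : ∃ C : ℝ, 0 < C ∧ ∀ v, ‖A v‖ ≤ C * ‖B v‖ := by
  let Q : LinearMap.range B →ₗ[ℝ] X :=
    (LinearMap.ker B).liftQ A h ∘ₗ B.quotKerEquivRange.symm.toLinearMap
  have hQ (v : V) : Q.toContinuousLinearMap (B.rangeRestrict v) = A v := by
    have hmk : B.rangeRestrict v = B.quotKerEquivRange (Submodule.Quotient.mk v) := rfl
    simp [Q, hmk]
  obtain ⟨C, hC, hle⟩ := Q.toContinuousLinearMap.bound
  exact ⟨C, hC, fun v ↦ (congrArg norm (hQ v)).symm.trans_le (hle (B.rangeRestrict v))⟩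

variable {α : Type*} [MeasurableSpace α] {μ : Measure α}

/-- The linear map into `L²` sending a parameter to the class of the function it indexes, for a
linear family of square-integrable functions. -/
noncomputable def toL2LinearMap (e : V →ₗ[ℝ] α → ℝ) (he : ∀ v, MemLp (e v) 2 μ) :
    V →ₗ[ℝ] Lp ℝ 2 μ where
  toFun v := (he v).toLp (e v)
  map_add' v w := by simp only [map_add, ← MemLp.toLp_add]
  map_smul' c v := by simp only [map_smul, ← MemLp.toLp_const_smul, RingHom.id_apply]

lemma norm_toL2LinearMap_sq (e : V →ₗ[ℝ] α → ℝ) (he : ∀ v, MemLp (e v) 2 μ) (v : V) :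
    ‖toL2LinearMap e he v‖ ^ 2 = ∫ x, e v x ^ 2 ∂μ := by
  rw [← real_inner_self_eq_norm_sq, L2.inner_def]
  refine integral_congr_ae ?_
  filter_upwards [(he v).coeFn_toLp] with x hx
  change inner ℝ ((he v).toLp (e v) x) ((he v).toLp (e v) x) = _
  rw [hx, real_inner_self_eq_norm_sq, Real.norm_eq_abs, sq_abs]

lemma toL2LinearMap_eq_zero_iff {e : V →ₗ[ℝ] α → ℝ} (he : ∀ v, MemLp (e v) 2 μ) {v : V} :
    toL2LinearMap e he v = 0 ↔ e v =ᵐ[μ] 0 :=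
  MemLp.toLp_eq_toLp_iff (he v) MemLp.zero

lemma exists_integral_sq_le_of_ae_eq_zero {β γ : Type*} [FiniteDimensional ℝ V]
    [MeasurableSpace β] [MeasurableSpace γ] {ν : Measure β} {τ : Measure γ}
    {e : V →ₗ[ℝ] α → ℝ} {f : V →ₗ[ℝ] β → ℝ} {g : V →ₗ[ℝ] γ → ℝ}
    (he : ∀ v, MemLp (e v) 2 μ) (hf : ∀ v, MemLp (f v) 2 ν) (hg : ∀ v, MemLp (g v) 2 τ)
    (h : ∀ v, f v =ᵐ[ν] 0 → g v =ᵐ[τ] 0 → e v =ᵐ[μ] 0) :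
    ∃ C : ℝ, 0 < C ∧ ∀ v,
      ∫ x, e v x ^ 2 ∂μ ≤ C * (∫ x, f v x ^ 2 ∂ν + ∫ x, g v x ^ 2 ∂τ) := by
  let B : V →ₗ[ℝ] WithLp 2 (Lp ℝ 2 ν × Lp ℝ 2 τ) :=
    (WithLp.linearEquiv 2 ℝ _).symm.toLinearMap ∘ₗ (toL2LinearMap f hf).prod (toL2LinearMap g hg)
  have hB (v : V) : ‖B v‖ ^ 2 = ∫ x, f v x ^ 2 ∂ν + ∫ x, g v x ^ 2 ∂τ := by
    rw [WithLp.prod_norm_sq_eq_of_L2, ← norm_toL2LinearMap_sq f hf, ← norm_toL2LinearMap_sq g hg]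
    rfl
  have hker : LinearMap.ker B ≤ LinearMap.ker (toL2LinearMap e he) := fun v hv ↦ by
    have hv0 : toL2LinearMap f hf v = 0 ∧ toL2LinearMap g hg v = 0 := by
      simpa [B] using hv
    exact (toL2LinearMap_eq_zero_iff he).2 <| h v ((toL2LinearMap_eq_zero_iff hf).1 hv0.1)
      ((toL2LinearMap_eq_zero_iff hg).1 hv0.2)
  obtain ⟨C, hC, hle⟩ := exists_norm_le_of_ker_le (toL2LinearMap e he) B hker
  refine ⟨C ^ 2, by positivity, fun v ↦ ?_⟩
  rw [← norm_toL2LinearMap_sq e he, ← hB, ← mul_pow]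
  gcongr
  exact hle v

end FiniteDimensionalComparison

section BoundedSets

variable {E : Type*} [PseudoMetricSpace E] [ProperSpace E] [MeasurableSpace E]
  [OpensMeasurableSpace E] {μ : Measure E} [IsFiniteMeasureOnCompacts μ] {f : E → ℝ} {s t : Set E}

lemma memLp_restrict_of_isBounded (hf : Continuous f) (hs : Bornology.IsBounded s)
    (p : ENNReal) : MemLp f p (μ.restrict s) := by
  have : IsFiniteMeasure (μ.restrict s) := ⟨by simpa using hs.measure_lt_top⟩
  obtain ⟨C, hC⟩ := hs.isCompact_closure.exists_bound_of_continuousOn hf.continuousOn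
  refine MemLp.of_bound hf.aestronglyMeasurable C ?_
  have hclosure : ∀ᵐ x ∂μ.restrict (closure s), ‖f x‖ ≤ C :=
    (ae_restrict_mem isClosed_closure.measurableSet).mono hC
  exact ae_restrict_of_ae_restrict_of_subset subset_closure hclosure

lemma setIntegral_sq_mono (hf : Continuous f) (ht : Bornology.IsBounded t) (hst : s ⊆ t) :
    ∫ x in s, f x ^ 2 ∂μ ≤ ∫ x in t, f x ^ 2 ∂μ :=
  setIntegral_mono_set (memLp_restrict_of_isBounded hf ht 2).integrable_sq
    (Filter.Eventually.of_forall fun _ ↦ sq_nonneg _) hst.eventuallyLE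

end BoundedSets

section DirectionalDerivative

variable {E F : Type*} [NormedAddCommGroup E] [NormedSpace ℝ E]
  [NormedAddCommGroup F] [NormedSpace ℝ F]

lemma apply_smul_add_of_fderiv_apply_eq_zero {u : E → F} {v : E} (hu : Differentiable ℝ u)
    (hv : ∀ x, fderiv ℝ u x v = 0) (t : ℝ) (x : E) : u (t • v + x) = u x := by
  have hderiv (s : ℝ) : HasDerivAt (fun s : ℝ ↦ u (s • v + x)) 0 s := by
    have hline : HasDerivAt (fun s : ℝ ↦ s • v + x) v s := by
      simpa using ((hasDerivAt_id s).smul_const v).add_const x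
    exact hv (s • v + x) ▸ (hu _).hasFDerivAt.comp_hasDerivAt s hline
  simpa using is_const_of_deriv_eq_zero (fun s ↦ (hderiv s).differentiableAt)
    (fun s ↦ (hderiv s).deriv) t 0

lemma fderiv_comp_add_smul_apply {G : Type*} [NormedAddCommGroup G] [NormedSpace ℝ G] {u : E → G}
    (hu : Differentiable ℝ u) (L : F →L[ℝ] E) (a : E) (ρ : ℝ) (z e : F) :
    fderiv ℝ (fun z ↦ u (a + ρ • L z)) z e = ρ • fderiv ℝ u (a + ρ • L z) (L e) := by
  have hinner : HasFDerivAt (fun z ↦ a + ρ • L z) (ρ • L) z :=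
    (L.hasFDerivAt.const_smul ρ).const_add a
  refine (DFunLike.congr_fun ((hu _).hasFDerivAt.comp z hinner).fderiv e).trans ?_
  simp

lemma analyticOnNhd_eq_zero_of_ae_restrict_eq_zero [MeasurableSpace E] {μ : Measure E}
    [μ.IsOpenPosMeasure] {f : E → F} (hf : AnalyticOnNhd ℝ f Set.univ) {U : Set E}
    (hU : IsOpen U) (hne : U.Nonempty) (h : f =ᵐ[μ.restrict U] 0) : f = 0 := by
  have hzero : Set.EqOn f 0 U := Measure.eqOn_open_of_ae_eq h hU
    (hf.continuousOn.mono (Set.subset_univ _)) continuousOn_const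
  obtain ⟨x, hx⟩ := hne
  exact hf.eq_of_eventuallyEq analyticOnNhd_const
    (Filter.eventuallyEq_of_mem (hU.mem_nhds hx) hzero)

/-- The directional derivative along `v`, as a linear map on a space of differentiable functions. -/
noncomputable def directionalDeriv (V : Submodule ℝ (E → ℝ)) (hV : ∀ u ∈ V, Differentiable ℝ u)
    (v : E) : V →ₗ[ℝ] E → ℝ where
  toFun u x := fderiv ℝ u x v
  map_add' u w := by
    ext x
    simp [fderiv_add (hV u u.2 x) (hV w w.2 x)]
  map_smul' c u := by
    ext x
    simp [fderiv_const_smul (hV u u.2 x) c]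

lemma exists_setIntegral_sq_le_fderiv_add_trace [ProperSpace E] [MeasurableSpace E] [BorelSpace E]
    [ProperSpace F] [MeasurableSpace F] [BorelSpace F]
    (μ : Measure E) [IsFiniteMeasureOnCompacts μ] [μ.IsOpenPosMeasure]
    (ν : Measure F) [IsFiniteMeasureOnCompacts ν] [ν.IsOpenPosMeasure]
    {V : Submodule ℝ (E → ℝ)} [FiniteDimensional ℝ V]
    (hV : ∀ u ∈ V, AnalyticOnNhd ℝ u Set.univ) {v : E} {φ : F →L[ℝ] E}
    (hspan : ∀ x, ∃ t : ℝ, ∃ y, t • v + φ y = x) {S U : Set E} {W : Set F}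
    (hS : Bornology.IsBounded S) (hUo : IsOpen U) (hUb : Bornology.IsBounded U) (hU : U.Nonempty)
    (hWo : IsOpen W) (hWb : Bornology.IsBounded W) (hW : W.Nonempty) :
    ∃ C : ℝ, 0 < C ∧ ∀ u ∈ V, ∫ x in S, u x ^ 2 ∂μ ≤
      C * (∫ x in U, fderiv ℝ u x v ^ 2 ∂μ + ∫ y in W, u (φ y) ^ 2 ∂ν) := by
  have hdiff (u) (hu : u ∈ V) : Differentiable ℝ u := fun x ↦
    (hV u hu x trivial).differentiableAt
  let trace : V →ₗ[ℝ] F → ℝ := LinearMap.funLeft ℝ ℝ φ ∘ₗ V.subtype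
  have hderiv (u : V) : AnalyticOnNhd ℝ (directionalDeriv V hdiff v u) Set.univ :=
    (ContinuousLinearMap.apply ℝ ℝ v).comp_analyticOnNhd (hV u u.2).fderiv
  have htrace (u : V) : AnalyticOnNhd ℝ (trace u) Set.univ := fun y _ ↦
    (hV u u.2 _ trivial).comp (φ.analyticAt y)
  have hdet (u : V) (hfu : directionalDeriv V hdiff v u =ᵐ[μ.restrict U] 0)
      (hgu : trace u =ᵐ[ν.restrict W] 0) : V.subtype u =ᵐ[μ.restrict S] 0 := by
    have hderiv_zero := analyticOnNhd_eq_zero_of_ae_restrict_eq_zero (hderiv u) hUo hU hfu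
    have htrace_zero := analyticOnNhd_eq_zero_of_ae_restrict_eq_zero (htrace u) hWo hW hgu
    refine Filter.Eventually.of_forall fun x ↦ ?_
    obtain ⟨t, y, rfl⟩ := hspan x
    exact (apply_smul_add_of_fderiv_apply_eq_zero (hdiff u u.2) (congrFun hderiv_zero) t _).trans
      (congrFun htrace_zero y)
  obtain ⟨C, hC, h⟩ := exists_integral_sq_le_of_ae_eq_zero
    (fun u : V ↦ memLp_restrict_of_isBounded (hV u u.2).continuous hS 2)
    (fun u ↦ memLp_restrict_of_isBounded (hderiv u).continuous hUb 2)
    (fun u ↦ memLp_restrict_of_isBounded (htrace u).continuous hWb 2) hdet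
  exact ⟨C, hC, fun u hu ↦ h ⟨u, hu⟩⟩

end DirectionalDerivative

section Similarity

variable {E F : Type*} [NormedAddCommGroup E] [InnerProductSpace ℝ E]
  [NormedAddCommGroup F] [InnerProductSpace ℝ F]

lemma exists_linearIsometryEquiv_smul_add {v : E} (hv : ‖v‖ = 1) {φ : F →ₗᵢ[ℝ] E}
    (hφ : Set.range φ = ((ℝ ∙ v)ᗮ : Submodule ℝ E)) :
    ∃ T : WithLp 2 (ℝ × F) ≃ₗᵢ[ℝ] E, ∀ z, T z = z.fst • v + φ z.snd := by
  have horth (y : F) : inner ℝ v (φ y) = 0 :=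
    Submodule.mem_orthogonal_singleton_iff_inner_right.1 (hφ.subset ⟨y, rfl⟩)
  let T : WithLp 2 (ℝ × F) →ₗᵢ[ℝ] E :=
    { toLinearMap := (LinearMap.toSpanSingleton ℝ E v).coprod φ.toLinearMap ∘ₗ
        (WithLp.linearEquiv 2 ℝ (ℝ × F)).toLinearMap
      norm_map' := fun z ↦ by
        refine (sq_eq_sq₀ (norm_nonneg _) (norm_nonneg _)).1 ?_
        rw [WithLp.prod_norm_sq_eq_of_L2]
        simp [norm_add_sq_real, inner_smul_left, horth, norm_smul, hv] }
  have hT (z : WithLp 2 (ℝ × F)) : T z = z.fst • v + φ z.snd := rfl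
  have hsurj : Function.Surjective T := fun x ↦ by
    obtain ⟨_, hx₁, x₂, hx₂, rfl⟩ := (ℝ ∙ v).exists_add_mem_mem_orthogonal x
    obtain ⟨t, rfl⟩ := Submodule.mem_span_singleton.1 hx₁
    obtain ⟨y, rfl⟩ := hφ.superset hx₂
    exact ⟨WithLp.toLp 2 (t, y), hT _⟩
  exact ⟨LinearIsometryEquiv.ofSurjective T hsurj, hT⟩

variable [FiniteDimensional ℝ E] [MeasurableSpace E] [BorelSpace E]
  [FiniteDimensional ℝ F] [MeasurableSpace F] [BorelSpace F]

open scoped Pointwise in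
lemma setIntegral_ball_eq_pow_finrank_mul (T : F ≃ₗᵢ[ℝ] E) (a : E) {ρ : ℝ} (hρ : 0 < ρ) (r : ℝ)
    (f : E → ℝ) :
    ∫ x in Metric.ball a (ρ * r), f x =
      ρ ^ Module.finrank ℝ F * ∫ z in Metric.ball 0 r, f (a + ρ • T z) := by
  have hiso : MeasurePreserving (fun z ↦ a + T z) (volume : Measure F) volume :=
    (measurePreserving_add_left volume a).comp T.measurePreserving
  have hemb : MeasurableEmbedding fun z ↦ a + T z :=
    (MeasurableEquiv.addLeft a).measurableEmbedding.comp T.toHomeomorph.measurableEmbedding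
  have hpreimage : (fun z ↦ a + T z) ⁻¹' Metric.ball a (ρ * r) = ρ • Metric.ball (0 : F) r := by
    ext z
    simp [smul_ball hρ.ne', abs_of_pos hρ]
  have hscale := Measure.setIntegral_comp_smul_of_pos (volume : Measure F)
    (fun z ↦ f (a + T z)) (Metric.ball 0 r) hρ
  simp only [map_smul] at hscale
  rw [hscale, smul_eq_mul, mul_inv_cancel_left₀ (by positivity), ← hpreimage,
    hiso.setIntegral_preimage_emb hemb]

variable (E F) in
lemma exists_setIntegral_ball_sq_le (p : ℕ) (R : ℝ) :
    ∃ C : ℝ, 0 < C ∧ ∀ u ∈ polyFunDegreeLE ℝ E p, ∀ (a v : E) (ρ : ℝ) (φ : F →ₗᵢ[ℝ] E),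
      0 < ρ → ‖v‖ = 1 → Set.range φ = ((ℝ ∙ v)ᗮ : Submodule ℝ E) →
      ∫ x in Metric.ball a (ρ * R), u x ^ 2 ≤
        C * (ρ ^ 2 * (∫ x in Metric.ball a ρ, fderiv ℝ u x v ^ 2) +
          ρ * ∫ y in Metric.ball 0 ρ, u (a + φ y) ^ 2) := by
  let v₀ : WithLp 2 (ℝ × F) := WithLp.toLp 2 (1, 0)
  let φ₀ : F →L[ℝ] WithLp 2 (ℝ × F) :=
    (WithLp.prodContinuousLinearEquiv 2 ℝ ℝ F).symm ∘L ContinuousLinearMap.inr ℝ ℝ F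
  have hspan (z : WithLp 2 (ℝ × F)) : ∃ t : ℝ, ∃ y, t • v₀ + φ₀ y = z :=
    ⟨z.fst, z.snd, WithLp.ofLp_injective 2 (Prod.ext (by simp [v₀, φ₀]) (by simp [v₀, φ₀]))⟩
  have hball {G : Type _} [NormedAddCommGroup G] : (Metric.ball (0 : G) 1).Nonempty :=
    Metric.nonempty_ball.2 one_pos
  obtain ⟨C, hC, h⟩ := exists_setIntegral_sq_le_fderiv_add_trace volume volume
    (V := polyFunDegreeLE ℝ _ p) (fun u ↦ analyticOnNhd_of_mem_polyFunDegreeLE) hspan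
    (Metric.isBounded_ball (x := 0) (r := R)) Metric.isOpen_ball Metric.isBounded_ball hball
    Metric.isOpen_ball Metric.isBounded_ball hball
  refine ⟨C, hC, fun u hu a v ρ φ hρ hv hφ ↦ ?_⟩
  obtain ⟨T, hT⟩ := exists_linearIsometryEquiv_smul_add hv hφ
  have hTv : T v₀ = v := by simp [hT, v₀]
  have hTφ (y : F) : T (φ₀ y) = φ y := by simp [hT, φ₀]
  have hdiff : Differentiable ℝ u := fun x ↦
    (analyticOnNhd_of_mem_polyFunDegreeLE hu x trivial).differentiableAt
  have hderiv (z) : fderiv ℝ (fun z ↦ u (a + ρ • T z)) z v₀ = ρ * fderiv ℝ u (a + ρ • T z) v :=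
    hTv ▸ fderiv_comp_add_smul_apply hdiff T.toContinuousLinearEquiv a ρ z v₀
  have hreference := h _ (comp_affine_mem_polyFunDegreeLE hu a (ρ • T.toLinearMap))
  have hfinrank : Module.finrank ℝ (WithLp 2 (ℝ × F)) = Module.finrank ℝ F + 1 := by
    rw [(WithLp.linearEquiv 2 ℝ (ℝ × F)).finrank_eq, Module.finrank_prod, Module.finrank_self,
      add_comm]
  simp only [LinearMap.smul_apply, LinearEquiv.coe_coe, LinearIsometryEquiv.coe_toLinearEquiv,
    hTφ, hderiv, mul_pow, integral_const_mul] at hreference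
  have hlhs := setIntegral_ball_eq_pow_finrank_mul T a hρ R fun x ↦ u x ^ 2
  have hrhs := setIntegral_ball_eq_pow_finrank_mul T a hρ 1 fun x ↦ fderiv ℝ u x v ^ 2
  have htrace := setIntegral_ball_eq_pow_finrank_mul (LinearIsometryEquiv.refl ℝ F) 0 hρ 1
    fun y ↦ u (a + φ y) ^ 2
  simp only [hfinrank, mul_one, LinearIsometryEquiv.coe_refl, id, zero_add, map_smul]
    at hlhs hrhs htrace
  rw [hlhs, hrhs, htrace]
  refine (mul_le_mul_of_nonneg_left hreference (by positivity)).trans_eq ?_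
  ring

end Similarity

theorem stmt13_general (E F : Type*) [NormedAddCommGroup E] [InnerProductSpace ℝ E]
    [FiniteDimensional ℝ E] [MeasurableSpace E] [BorelSpace E] [NormedAddCommGroup F]
    [InnerProductSpace ℝ F] [FiniteDimensional ℝ F] [MeasurableSpace F] [BorelSpace F]
    (p : ℕ) {c₀ : ℝ} (hc₀ : 0 < c₀) :
    ∃ C : ℝ, 0 < C ∧
      ∀ (K : Set E) (xK : E) (ρK : ℝ) (b : E) (φ : F →ₗᵢ[ℝ] E) (u : E → ℝ),
        Bornology.IsBounded K → 0 < ρK → Metric.ball xK ρK ⊆ K → c₀ * Metric.diam K ≤ ρK →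
        b ≠ 0 → Set.range φ = ((ℝ ∙ b)ᗮ : Submodule ℝ E) → u ∈ polyFunDegreeLE ℝ E p →
        (Metric.diam K)⁻¹ * ∫ x in K, u x ^ 2 ≤
          C * (Metric.diam K * (∫ x in K, fderiv ℝ u x (‖b‖⁻¹ • b) ^ 2) +
            ∫ y in Metric.ball (0 : F) ρK, u (xK + φ y) ^ 2) := by
  obtain ⟨C, hC, hball_le⟩ := exists_setIntegral_ball_sq_le E F p (c₀⁻¹ + 1)
  refine ⟨C, hC, fun K xK ρK b φ u hK hρ hball hdiam hb hφ hu ↦ ?_⟩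
  have : Nontrivial E := nontrivial_of_ne b 0 hb
  have hspan : (ℝ ∙ (‖b‖⁻¹ • b)) = ℝ ∙ b :=
    Submodule.span_singleton_smul_eq (by simpa using hb) b
  have hρ_le : ρK ≤ Metric.diam K := by
    have := Metric.diam_ball_eq xK hρ.le ▸ Metric.diam_mono hball hK
    linarith
  have hK_subset : K ⊆ Metric.ball xK (ρK * (c₀⁻¹ + 1)) := fun x hx ↦
    calc dist x xK
      _ ≤ Metric.diam K := Metric.dist_le_diam_of_mem hK hx (hball (Metric.mem_ball_self hρ))
      _ ≤ ρK * c₀⁻¹ := (le_mul_inv_iff₀' hc₀).2 hdiam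
      _ < ρK * (c₀⁻¹ + 1) := by linarith
  have hanalytic := analyticOnNhd_of_mem_polyFunDegreeLE hu
  have hderiv_cont : Continuous fun x ↦ fderiv ℝ u x (‖b‖⁻¹ • b) :=
    hanalytic.fderiv.continuous.clm_apply continuous_const
  have hderiv_le := setIntegral_sq_mono (μ := volume) hderiv_cont hK hball
  rw [inv_mul_le_iff₀ (hρ.trans_le hρ_le)]
  calc ∫ x in K, u x ^ 2
    _ ≤ ∫ x in Metric.ball xK (ρK * (c₀⁻¹ + 1)), u x ^ 2 :=
      setIntegral_sq_mono hanalytic.continuous Metric.isBounded_ball hK_subset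
    _ ≤ C * (ρK ^ 2 * (∫ x in Metric.ball xK ρK, fderiv ℝ u x (‖b‖⁻¹ • b) ^ 2) +
          ρK * ∫ y in Metric.ball (0 : F) ρK, u (xK + φ y) ^ 2) :=
      hball_le u hu xK _ ρK φ hρ (norm_smul_inv_norm hb) (hspan.symm ▸ hφ)
    _ ≤ C * (Metric.diam K ^ 2 * (∫ x in K, fderiv ℝ u x (‖b‖⁻¹ • b) ^ 2) +
          Metric.diam K * ∫ y in Metric.ball (0 : F) ρK, u (xK + φ y) ^ 2) := by
      gcongr
    _ = _ := by ring

/-- On a shape-regular element `K` with inscribed ball `B(x_K, ρ_K)` and a nonzero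
direction `b`, the scaled `L²(K)` norm of a polynomial `u` of degree ≤ p is controlled
by the directional derivative along `b/‖b‖` and the trace on the hyperplane section
through `x_K` orthogonal to `b` (parametrized by any linear isometry `φ` of
`ℝ^{d−1}` onto `(ℝ b)ᗮ`). -/
theorem stmt13 (d p : ℕ) (c₀ : ℝ) (hc₀ : 0 < c₀) :
    ∃ C : ℝ, 0 < C ∧
      ∀ (K : Set (EuclideanSpace ℝ (Fin d))) (xK : EuclideanSpace ℝ (Fin d)) (ρK : ℝ)
        (b : EuclideanSpace ℝ (Fin d)) (q : MvPolynomial (Fin d) ℝ)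
        (φ : EuclideanSpace ℝ (Fin (d - 1)) →ₗᵢ[ℝ] EuclideanSpace ℝ (Fin d)),
        MeasurableSet K → Bornology.IsBounded K → 0 < ρK →
        Metric.ball xK ρK ⊆ K → c₀ * Metric.diam K ≤ ρK → b ≠ 0 →
        Set.range φ = ((ℝ ∙ b)ᗮ : Submodule ℝ (EuclideanSpace ℝ (Fin d))) →
        q.totalDegree ≤ p →
        let u : EuclideanSpace ℝ (Fin d) → ℝ := fun x => MvPolynomial.eval (fun i => x i) q
        let br : EuclideanSpace ℝ (Fin d) := ‖b‖⁻¹ • b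
        (Metric.diam K)⁻¹ * ∫ x in K, (u x) ^ 2 ≤
          C * (Metric.diam K * (∫ x in K, (fderiv ℝ u x br) ^ 2) +
            ∫ y in Metric.ball (0 : EuclideanSpace ℝ (Fin (d - 1))) ρK, (u (xK + φ y)) ^ 2) := by
  obtain ⟨C, hC, h⟩ :=
    stmt13_general (EuclideanSpace ℝ (Fin d)) (EuclideanSpace ℝ (Fin (d - 1))) p hc₀
  exact ⟨C, hC, fun K xK ρK b q φ _ hK hρ hball hdiam hb hφ hq ↦ h K xK ρK b φ
    (fun x ↦ MvPolynomial.eval (fun i ↦ x i) q) hK hρ hball hdiam hb hφ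
    (eval_mem_polyFunDegreeLE q hq fun i ↦ (EuclideanSpace.proj i).toLinearMap)⟩
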